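/- Let $d$ be a positive integer and let $\theta^{(d)} \in \mathbb{R}^d$, $v > 0$. Then the risk of the James--Stein estimator satisfies $\mathrm{E}_v\|\theta^{(d)} - \hat{\theta}^{(d)}_{\mathrm{JS}}(X^{(d)})\|^2 \leq 2v + \frac{d v \|\theta^{(d)}\|^2}{d v + \|\theta^{(d)}\|^2}$, where $X^{(d)} \sim \mathcal{N}(\theta^{(d)}, v I_d)$ and $\hat{\theta}^{(d)}_{\mathrm{JS}}(x) = \left(1 - \frac{(d-2)v}{\|x\|^2}\right)x$. -/

import Mathlib

open MeasureTheory ProbabilityTheory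

lemma js_integrable_gauss {θ : ℝ} {v : ℝ} (hv : 0 < v) {f : ℝ → ℝ}
    (hf : Integrable f (gaussianReal θ v.toNNReal)) :
    Integrable (fun x => gaussianPDFReal θ v.toNNReal x * f x) := by
  have hv' : v.toNNReal ≠ 0 := by simpa using hv
  rw [gaussianReal_of_var_ne_zero _ hv', 
    integrable_withDensity_iff_integrable_smul' (measurable_gaussianPDF _ _)
      (ae_of_all _ fun x => by simp [gaussianPDF])] at hf
  simpa [toReal_gaussianPDF] using hf

lemma js_hasDerivAt_pdf (θ : ℝ) {v : ℝ} (hv : 0 < v) (x : ℝ) :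
    HasDerivAt (gaussianPDFReal θ v.toNNReal)
      (-((x - θ) / v) * gaussianPDFReal θ v.toNNReal x) x := by
  rw [gaussianPDFReal_def, Real.coe_toNNReal _ hv.le]
  have h : HasDerivAt (fun x : ℝ => -(x - θ)^2 / (2 * v)) (-((x-θ)/v)) x := by
    have := ((((hasDerivAt_id x).sub_const θ).pow 2).neg).div_const (2*v)
    refine this.congr_deriv ?_
    simp
    field_simp
  refine (h.exp.const_mul ((√(2 * Real.pi * v))⁻¹)).congr_deriv ?_
  ring

lemma js_stein {θ : ℝ} {v : ℝ} (hv : 0 < v) {f f' : ℝ → ℝ} (hd : ∀ x, HasDerivAt f (f' x) x)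
    (h1 : Integrable f (gaussianReal θ v.toNNReal))
    (h2 : Integrable f' (gaussianReal θ v.toNNReal))
    (h3 : Integrable (fun x => (x - θ) * f x) (gaussianReal θ v.toNNReal)) :
    ∫ x, (x - θ) * f x ∂(gaussianReal θ v.toNNReal)
      = v * ∫ x, f' x ∂(gaussianReal θ v.toNNReal) := by
  have hv' : v.toNNReal ≠ 0 := by simpa using hv
  have key : ∫ x, (gaussianPDFReal θ v.toNNReal x * (f' x - v⁻¹ * ((x - θ) * f x))) = 0 := by
    refine integral_eq_zero_of_hasDerivAt_of_integrable
      (f := fun x => gaussianPDFReal θ v.toNNReal x * f x) (fun x => ?_) ?_ ?_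
    · refine ((js_hasDerivAt_pdf θ hv x).mul (hd x)).congr_deriv ?_
      field_simp
      ring
    · exact js_integrable_gauss hv (h2.sub (h3.const_mul v⁻¹))
    · exact js_integrable_gauss hv h1
  have e : ∫ x, (f' x - v⁻¹ * ((x - θ) * f x)) ∂(gaussianReal θ v.toNNReal) = 0 := by
    rw [integral_gaussianReal_eq_integral_smul hv']
    simpa using key
  rw [integral_sub h2 (h3.const_mul _), integral_const_mul] at e
  field_simp at e
  linarith

lemma js_sign {θ : ℝ} {v : ℝ} (hv : 0 < v) {h : ℝ → ℝ} (h0 : ∀ x, 0 ≤ h x)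
    (he : ∀ x, h (-x) = h x)
    (hi : Integrable (fun x => θ * x * h x) (gaussianReal θ v.toNNReal)) :
    0 ≤ ∫ x, θ * x * h x ∂(gaussianReal θ v.toNNReal) := by
  have hv' : v.toNNReal ≠ 0 := by simpa using hv
  rw [integral_gaussianReal_eq_integral_smul hv']
  simp only [smul_eq_mul]
  have hi' := js_integrable_gauss hv hi
  have hn := hi'.comp_neg
  have e := integral_neg_eq_self
    (fun x => gaussianPDFReal θ v.toNNReal x * (θ * x * h x)) volume
  have s : 0 ≤ ∫ x, (gaussianPDFReal θ v.toNNReal x * (θ * x * h x)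
      + gaussianPDFReal θ v.toNNReal (-x) * (θ * (-x) * h (-x))) := by
    refine integral_nonneg fun x => ?_
    simp only [he, Pi.zero_apply]
    have : 0 ≤ (gaussianPDFReal θ v.toNNReal x - gaussianPDFReal θ v.toNNReal (-x)) * (θ * x) := by
      simp only [gaussianPDFReal, Real.coe_toNNReal _ hv.le]
      rw [← mul_sub, mul_assoc]
      refine mul_nonneg (by positivity) ?_
      rcases le_total 0 (θ * x) with hx | hx
      · refine mul_nonneg (sub_nonneg.2 (Real.exp_le_exp.2 ?_)) hx
        gcongr ?_ / _
        nlinarith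
      · refine mul_nonneg_of_nonpos_of_nonpos (sub_nonpos.2 (Real.exp_le_exp.2 ?_)) hx
        gcongr ?_ / _
        nlinarith
    nlinarith [mul_nonneg this (h0 x)]
  rw [integral_add hi' hn, e] at s
  linarith

lemma js_fubini {n : ℕ} (μ : Fin (n+1) → Measure ℝ) [∀ i, IsProbabilityMeasure (μ i)]
    (i : Fin (n+1)) {F : (Fin (n+1) → ℝ) → ℝ} (hF : Integrable F (Measure.pi μ))
    (h : ∀ y : Fin n → ℝ, 0 ≤ ∫ t, F (i.insertNth t y) ∂(μ i)) :
    0 ≤ ∫ x, F x ∂(Measure.pi μ) := by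
  have mp := (measurePreserving_piFinSuccAbove μ i).symm
  rw [← mp.integral_comp']
  rw [← mp.integrable_comp_emb (MeasurableEquiv.measurableEmbedding _)] at hF
  refine le_of_le_of_eq ?_ (integral_prod_symm _ hF).symm
  exact integral_nonneg fun y => h y

lemma js_b1 {a N ε : ℝ} (h : a^2 ≤ N) (hε : 0 < ε) : |a / (N + ε)| ≤ 1 + 1/ε := by
  have hN : 0 ≤ N := (sq_nonneg a).trans h
  rw [abs_div, abs_of_pos (by positivity : 0 < N + ε), div_le_iff₀ (by positivity)]
  have : (1 + 1/ε) * (N + ε) = N + ε + N/ε + 1 := by field_simp; ring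
  rw [this]
  have : 0 ≤ N / ε := by positivity
  nlinarith [sq_abs a, sq_nonneg (|a| - 1)]

lemma js_b2 {N ε : ℝ} (hN : 0 ≤ N) (hε : 0 < ε) : |1 / (N + ε)| ≤ 1/ε := by
  rw [abs_of_pos (by positivity)]
  gcongr; linarith

lemma js_b3 {a N ε : ℝ} (h : a^2 ≤ N) (hε : 0 < ε) : |a^2 / (N + ε)^2| ≤ 1/ε := by
  have hN : 0 ≤ N := (sq_nonneg a).trans h
  rw [abs_of_nonneg (by positivity), div_le_div_iff₀ (by positivity) hε]
  nlinarith [mul_nonneg hN hε.le]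

lemma js_b4 {a N ε : ℝ} (h : a^2 ≤ N) (hε : 0 < ε) :
    |1 / (N + ε) - 2 * (a^2 / (N + ε)^2)| ≤ 1/ε + 2 * (1/ε) := by
  refine (abs_sub _ _).trans ?_
  rw [abs_mul, abs_two]
  gcongr
  · exact js_b2 ((sq_nonneg a).trans h) hε
  · exact js_b3 h hε

lemma js_b5 {a N ε : ℝ} (h : a^2 ≤ N) (hε : 0 < ε) :
    |a / (N + ε)^2| ≤ (1 + 1/ε) * (1/ε) := by
  have hN : 0 ≤ N := (sq_nonneg a).trans h
  have : a / (N+ε)^2 = (a/(N+ε)) * (1/(N+ε)) := by field_simp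
  rw [this, abs_mul]
  gcongr
  · exact js_b1 h hε
  · exact js_b2 hN hε

lemma js_bdd {α : Type*} [MeasurableSpace α] {μ : Measure α} [IsFiniteMeasure μ] {g : α → ℝ}
    (hg : Measurable g) {C : ℝ} (hC : ∀ x, |g x| ≤ C) : Integrable g μ :=
  Integrable.of_bound hg.aestronglyMeasurable C (ae_of_all _ hC)

lemma js_mul_bdd {α : Type*} [MeasurableSpace α] {μ : Measure α} [IsFiniteMeasure μ] {f g : α → ℝ}
    (hf : Integrable f μ)
    (hg : Measurable g) {C : ℝ} (hC : ∀ x, |g x| ≤ C) : Integrable (fun x => f x * g x) μ :=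
  hf.mul_bdd hg.aestronglyMeasurable (ae_of_all _ hC)

lemma js_int_id (θ v : ℝ) : Integrable (fun x => x - θ) (gaussianReal θ v.toNNReal) := by
  have := (memLp_id_gaussianReal (μ := θ) (v := v.toNNReal) 1).integrable (by norm_num)
  exact this.sub (integrable_const _)

/-- one-dimensional identity for `t / (t^2 + r + ε)` -/
lemma js_one1 {θ v r ε : ℝ} (hv : 0 < v) (hr : 0 ≤ r) (hε : 0 < ε) :
    ∫ t, ((t - θ) * (t / (t^2 + r + ε)) - v * (1 / (t^2 + r + ε) - 2 * (t^2 / (t^2 + r + ε)^2)))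
      ∂(gaussianReal θ v.toNNReal) = 0 := by
  have hle : ∀ t : ℝ, t^2 ≤ t^2 + r := fun t => by linarith
  have i1 : Integrable (fun t : ℝ => t / (t^2 + r + ε)) (gaussianReal θ v.toNNReal) :=
    js_bdd (by fun_prop) (fun t => js_b1 (hle t) hε)
  have i2 : Integrable (fun t : ℝ => 1 / (t^2 + r + ε) - 2 * (t^2 / (t^2 + r + ε)^2))
      (gaussianReal θ v.toNNReal) :=
    js_bdd (by fun_prop) (fun t => js_b4 (hle t) hε)
  have i3 : Integrable (fun t : ℝ => (t - θ) * (t / (t^2 + r + ε))) (gaussianReal θ v.toNNReal) :=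
    js_mul_bdd (js_int_id θ v) (by fun_prop) (fun t => js_b1 (hle t) hε)
  rw [integral_sub i3 (i2.const_mul v), integral_const_mul, js_stein hv (fun t => ?_) i1 i2 i3,
    sub_self]
  have hp : t^2 + r + ε ≠ 0 := by positivity
  have hd : HasDerivAt (fun t : ℝ => t^2 + r + ε) (2 * t) t := by
    simpa using (((hasDerivAt_id t).pow 2).add_const r).add_const ε
  refine ((hasDerivAt_id t).div hd hp).congr_deriv ?_
  simp only [id]
  field_simp

lemma js_one2 {θ v r ε : ℝ} (hv : 0 < v) (hr : 0 ≤ r) (hε : 0 < ε) :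
    0 ≤ ∫ t, -(θ * ((t - θ) * (1 / (t^2 + r + ε)))) ∂(gaussianReal θ v.toNNReal) := by
  have hle : ∀ t : ℝ, t^2 ≤ t^2 + r := fun t => by linarith
  have h0 : ∀ t : ℝ, 0 ≤ t^2 + r := fun t => by positivity
  have i1 : Integrable (fun t : ℝ => 1 / (t^2 + r + ε)) (gaussianReal θ v.toNNReal) :=
    js_bdd (by fun_prop) (fun t => js_b2 (h0 t) hε)
  have i2 : Integrable (fun t : ℝ => t / (t^2 + r + ε)^2)
      (gaussianReal θ v.toNNReal) :=
    js_bdd (by fun_prop) (fun t => js_b5 (hle t) hε)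
  have i3 : Integrable (fun t : ℝ => (t - θ) * (1 / (t^2 + r + ε))) (gaussianReal θ v.toNNReal) :=
    js_mul_bdd (js_int_id θ v) (by fun_prop) (fun t => js_b2 (h0 t) hε)
  rw [integral_neg, integral_const_mul, js_stein (f' := fun t => (-2) * (t / (t^2 + r + ε)^2)) hv
    (fun t => ?_) i1 (i2.const_mul _) i3, integral_const_mul]
  · have := js_sign (θ := θ) hv (h := fun t => 1 / (t^2+r+ε)^2) (fun t => by positivity)
      (fun t => by simp) ((i2.const_mul θ).congr (ae_of_all _ fun t => by ring))
    have e : ∫ t, θ * t * (1 / (t^2+r+ε)^2) ∂(gaussianReal θ v.toNNReal)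
        = θ * ∫ t, t / (t^2+r+ε)^2 ∂(gaussianReal θ v.toNNReal) := by
      rw [← integral_const_mul]
      congr 1; ext t; ring
    rw [e] at this
    nlinarith [mul_nonneg hv.le this]
  have hp : t^2 + r + ε ≠ 0 := by positivity
  have hd : HasDerivAt (fun t : ℝ => t^2 + r + ε) (2 * t) t := by
    simpa using (((hasDerivAt_id t).pow 2).add_const r).add_const ε
  refine ((hasDerivAt_const t (1:ℝ)).div hd hp).congr_deriv ?_
  field_simp
  ring

section
variable {n : ℕ} (θ : Fin (n+1) → ℝ) (v : ℝ)

lemma js_int_coord (i : Fin (n+1)) : Integrable (fun x : Fin (n+1) → ℝ => x i - θ i)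
    (Measure.pi fun i => gaussianReal (θ i) v.toNNReal) :=
  integrable_comp_eval (μ := fun i => gaussianReal (θ i) v.toNNReal) (i := i)
    (js_int_id (θ i) v)

lemma js_sq_le (x : Fin (n+1) → ℝ) (i : Fin (n+1)) : x i ^ 2 ≤ ∑ j, x j ^ 2 :=
  Finset.single_le_sum (f := fun j => x j ^ 2) (fun _ _ => sq_nonneg _) (Finset.mem_univ i)

lemma js_N_nonneg (x : Fin (n+1) → ℝ) : 0 ≤ ∑ j, x j ^ 2 :=
  Finset.sum_nonneg fun _ _ => sq_nonneg _

lemma js_multi1 (hv : 0 < v) {ε : ℝ} (hε : 0 < ε) (i : Fin (n+1)) :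
    ∫ x : Fin (n+1) → ℝ, ((x i - θ i) * (x i / (∑ j, x j ^ 2 + ε))
      - v * (1 / (∑ j, x j ^ 2 + ε) - 2 * (x i ^2 / (∑ j, x j ^ 2 + ε)^2)))
      ∂(Measure.pi fun i => gaussianReal (θ i) v.toNNReal) = 0 := by
  have i1 : Integrable (fun x : Fin (n+1) → ℝ => ((x i - θ i) * (x i / (∑ j, x j ^ 2 + ε))
      - v * (1 / (∑ j, x j ^ 2 + ε) - 2 * (x i ^2 / (∑ j, x j ^ 2 + ε)^2))))
      (Measure.pi fun i => gaussianReal (θ i) v.toNNReal) :=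
    (js_mul_bdd (js_int_coord θ v i) (by fun_prop) fun x => js_b1 (js_sq_le x i) hε).sub
      ((js_bdd (by fun_prop) fun x => js_b4 (js_sq_le x i) hε).const_mul v)
  have key : ∀ y : Fin n → ℝ, _ := fun y => js_one1 (θ := θ i) (v := v) (r := ∑ j, y j ^ 2) hv
    (Finset.sum_nonneg fun _ _ => sq_nonneg _) hε
  apply le_antisymm
  · rw [← neg_nonneg, ← integral_neg]
    refine js_fubini _ i i1.neg fun y => ?_
    simp only [Fin.sum_univ_succAbove _ i, Fin.insertNth_apply_same,
      Fin.insertNth_apply_succAbove]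
    rw [integral_neg, key y, neg_zero]
  · refine js_fubini _ i i1 fun y => ?_
    simp only [Fin.sum_univ_succAbove _ i, Fin.insertNth_apply_same,
      Fin.insertNth_apply_succAbove]
    rw [key y]

lemma js_multi2 (hv : 0 < v) {ε : ℝ} (hε : 0 < ε) (i : Fin (n+1)) :
    0 ≤ ∫ x : Fin (n+1) → ℝ, -(θ i * ((x i - θ i) * (1 / (∑ j, x j ^ 2 + ε))))
      ∂(Measure.pi fun i => gaussianReal (θ i) v.toNNReal) := by
  refine js_fubini _ i ?_ fun y => ?_
  · exact ((js_mul_bdd (js_int_coord θ v i) (by fun_prop)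
      fun x => js_b2 (js_N_nonneg x) hε).const_mul _).neg
  · simp only [Fin.sum_univ_succAbove _ i, Fin.insertNth_apply_same,
      Fin.insertNth_apply_succAbove]
    exact js_one2 hv (Finset.sum_nonneg fun _ _ => sq_nonneg _) hε

lemma js_T_sq (x : Fin (n+1) → ℝ) :
    (∑ i, θ i * x i)^2 ≤ (∑ i, θ i ^ 2) * ∑ i, x i ^ 2 :=
  Finset.sum_mul_sq_le_sq_mul_sq _ _ _

lemma js_T_abs {c : ℝ} (hc : 0 < c) (x : Fin (n+1) → ℝ) :
    |∑ i, θ i * x i| ≤ c / 2 + (∑ i, θ i ^ 2) / (2 * c) * ∑ i, x i ^ 2 := by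
  have h := js_T_sq θ x
  set T := ∑ i, θ i * x i
  set t := ∑ i, θ i ^ 2
  set N := ∑ i, x i ^ 2
  have e : c / 2 + t / (2 * c) * N = (c^2 + t * N) / (2 * c) := by field_simp
  rw [e, le_div_iff₀ (by positivity)]
  nlinarith [sq_nonneg (|T| - c), sq_abs T]

/-- the Stein integrand -/
noncomputable def jsG (ε : ℝ) (x : Fin (n+1) → ℝ) : ℝ :=
  (∑ j, x j ^ 2) / (∑ j, x j ^ 2 + ε) - (∑ j, θ j * x j) / (∑ j, x j ^ 2 + ε)
    - v * (((n:ℝ) + 1) / (∑ j, x j ^ 2 + ε) - 2 * ((∑ j, x j ^ 2) / (∑ j, x j ^ 2 + ε)^2))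

noncomputable def jsH (ε : ℝ) (x : Fin (n+1) → ℝ) : ℝ :=
  ((∑ j, θ j ^ 2) - (∑ j, θ j * x j)) / (∑ j, x j ^ 2 + ε)

lemma js_G_int {ε : ℝ} (hε : 0 < ε) : Integrable (jsG θ v ε)
    (Measure.pi fun i => gaussianReal (θ i) v.toNNReal) ∧ (0 < v →
    ∫ x, jsG θ v ε x ∂(Measure.pi fun i => gaussianReal (θ i) v.toNNReal) = 0) := by
  have e : jsG θ v ε = fun x : Fin (n+1) → ℝ => ∑ i, ((x i - θ i) * (x i / (∑ j, x j ^ 2 + ε))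
      - v * (1 / (∑ j, x j ^ 2 + ε) - 2 * (x i ^2 / (∑ j, x j ^ 2 + ε)^2))) := by
    ext x
    have h1 : ∀ i, (x i - θ i) * (x i / (∑ j, x j ^ 2 + ε))
      - v * (1 / (∑ j, x j ^ 2 + ε) - 2 * (x i ^2 / (∑ j, x j ^ 2 + ε)^2)) =
      x i ^ 2 * (1 / (∑ j, x j ^ 2 + ε)) - θ i * x i * (1 / (∑ j, x j ^ 2 + ε))
      - (v * (1 / (∑ j, x j ^ 2 + ε)) - x i ^2 * (v * 2 / (∑ j, x j ^ 2 + ε)^2)) := fun i => by ring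
    simp_rw [h1, Finset.sum_sub_distrib, ← Finset.sum_mul]
    simp [jsG]
    ring
  have i1 : ∀ i, Integrable (fun x : Fin (n+1) → ℝ => ((x i - θ i) * (x i / (∑ j, x j ^ 2 + ε))
      - v * (1 / (∑ j, x j ^ 2 + ε) - 2 * (x i ^2 / (∑ j, x j ^ 2 + ε)^2))))
      (Measure.pi fun i => gaussianReal (θ i) v.toNNReal) := fun i =>
    (js_mul_bdd (js_int_coord θ v i) (by fun_prop) fun x => js_b1 (js_sq_le x i) hε).sub
      ((js_bdd (by fun_prop) fun x => js_b4 (js_sq_le x i) hε).const_mul v)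
  rw [e]
  refine ⟨integrable_finsetSum _ fun i _ => i1 i, fun hv => ?_⟩
  rw [integral_finsetSum _ fun i _ => i1 i]
  exact Finset.sum_eq_zero fun i _ => js_multi1 θ v hv hε i

lemma js_H_int {ε : ℝ} (hv : 0 < v) (hε : 0 < ε) :
    0 ≤ ∫ x, jsH θ ε x ∂(Measure.pi fun i => gaussianReal (θ i) v.toNNReal) := by
  have e : jsH θ ε = fun x : Fin (n+1) → ℝ =>
      ∑ i, -(θ i * ((x i - θ i) * (1 / (∑ j, x j ^ 2 + ε)))) := by
    ext x
    have h1 : ∀ i, -(θ i * ((x i - θ i) * (1 / (∑ j, x j ^ 2 + ε)))) =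
      θ i ^ 2 * (1 / (∑ j, x j ^ 2 + ε)) - θ i * x i * (1 / (∑ j, x j ^ 2 + ε)) :=
      fun i => by ring
    simp_rw [h1, Finset.sum_sub_distrib, ← Finset.sum_mul]
    simp [jsH]
    ring
  rw [e, integral_finsetSum _ fun i _ => ?_]
  · exact Finset.sum_nonneg fun i _ => js_multi2 θ v hv hε i
  · exact ((js_mul_bdd (js_int_coord θ v i) (by fun_prop)
      fun x => js_b2 (js_N_nonneg x) hε).const_mul _).neg

lemma js_inv_bound (hv : 0 < v) (hn : 0 < (n:ℝ) - 1) {ε : ℝ} (hε : 0 < ε) :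
    ∫ x : Fin (n+1) → ℝ, 1 / (∑ j, x j ^ 2 + ε) ∂(Measure.pi fun i => gaussianReal (θ i) v.toNNReal)
    ≤ (1 + (∑ i, θ i ^ 2) / (2 * (((n:ℝ) - 1) * v))) / ((((n:ℝ) - 1) * v) / 2) := by
  have hc : 0 < ((n:ℝ) - 1) * v := by positivity
  set c := ((n:ℝ) - 1) * v with hcdef
  obtain ⟨i1, i2⟩ := js_G_int θ v hε
  have i3 : Integrable (fun x : Fin (n+1) → ℝ => 1 / (∑ j, x j ^ 2 + ε))
    (Measure.pi fun i => gaussianReal (θ i) v.toNNReal) :=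
    js_bdd (by fun_prop) fun x => js_b2 (js_N_nonneg x) hε
  rw [le_div_iff₀ (by positivity), ← integral_mul_const]
  have hmono : ∫ x : Fin (n+1) → ℝ, 1 / (∑ j, x j ^ 2 + ε) * (c / 2)
      ∂(Measure.pi fun i => gaussianReal (θ i) v.toNNReal) ≤
      ∫ x : Fin (n+1) → ℝ, ((1 + (∑ i, θ i ^ 2) / (2 * c)) - jsG θ v ε x)
      ∂(Measure.pi fun i => gaussianReal (θ i) v.toNNReal) := by
    refine integral_mono (i3.mul_const _) ((integrable_const _).sub i1) fun x => ?_
    have hT := js_T_abs θ hc x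
    have hN := js_N_nonneg x
    have ht := js_N_nonneg θ
    simp only [jsG]
    set T := ∑ i, θ i * x i
    set t := ∑ i, θ i ^ 2
    set N := ∑ i, x i ^ 2
    have hp : 0 < N + ε := by positivity
    have a1 : N / (N + ε) ≤ 1 := by rw [div_le_one hp]; linarith
    have a2 : -(T / (N+ε)) ≤ 1 / (N+ε) * (c/2) + t / (2*c) := by
      have : -T ≤ c/2 + t / (2*c) * (N + ε) := by
        have : 0 ≤ t / (2*c) * ε := by positivity
        linarith [neg_abs_le T]
      calc -(T / (N+ε)) = (-T) / (N+ε) := by ring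
        _ ≤ (c/2 + t / (2*c) * (N + ε)) / (N+ε) := by gcongr
        _ = _ := by field_simp
    have a3 : N / (N+ε)^2 ≤ 1 / (N+ε) := by
      rw [div_le_div_iff₀ (by positivity) hp]; nlinarith
    have a4 : v * (((n:ℝ) + 1) / (N+ε) - 2 * (N / (N+ε)^2)) ≥ c * (1 / (N+ε)) := by
      have : ((n:ℝ) + 1) / (N+ε) - 2 * (N / (N+ε)^2) ≥ ((n:ℝ) - 1) * (1/ (N+ε)) := by
        have : ((n:ℝ) + 1) / (N+ε) = ((n:ℝ) - 1) * (1/ (N+ε)) + 2 * (1 / (N+ε)) := by ring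
        linarith
      rw [hcdef]
      nlinarith
    linarith
  rw [integral_sub (integrable_const _) i1, i2 hv] at hmono
  simpa using hmono

lemma js_ae_ne (hv : 0 < v) : ∀ᵐ x : Fin (n+1) → ℝ
    ∂(Measure.pi fun i => gaussianReal (θ i) v.toNNReal), 0 < ∑ j, x j ^ 2 := by
  have hv' : v.toNNReal ≠ 0 := by simpa using hv
  have := nullSingletonClass_gaussianReal (μ := θ 0) hv'
  have h0 : ∀ᵐ y : ℝ ∂(gaussianReal (θ 0) v.toNNReal), y ≠ 0 := by
    simp [ae_iff]
  have h1 := (measurePreserving_eval (fun i => gaussianReal (θ i) v.toNNReal)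
    0).quasiMeasurePreserving.ae h0
  filter_upwards [h1] with x hx
  have : 0 < x 0 ^ 2 := by simp at hx; positivity
  exact this.trans_le (js_sq_le x 0)

lemma js_eps_tendsto : Filter.Tendsto (fun k : ℕ => 1 / ((k:ℝ) + 1)) Filter.atTop (nhds 0) :=
  tendsto_one_div_add_atTop_nhds_zero_nat

lemma js_inv_int (hv : 0 < v) (hn : 0 < (n:ℝ) - 1) :
    Integrable (fun x : Fin (n+1) → ℝ => 1 / (∑ j, x j ^ 2))
      (Measure.pi fun i => gaussianReal (θ i) v.toNNReal) := by
  refine ⟨Measurable.aestronglyMeasurable (by fun_prop), ?_⟩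
  rw [hasFiniteIntegral_iff_ofReal (ae_of_all _ fun x => by
    have := js_N_nonneg x
    simp only [Pi.zero_apply]; positivity)]
  set K := (1 + (∑ i, θ i ^ 2) / (2 * (((n:ℝ) - 1) * v))) / ((((n:ℝ) - 1) * v) / 2)
  refine lt_of_le_of_lt (b := ENNReal.ofReal K) ?_ ENNReal.ofReal_lt_top
  have hpos : ∀ k : ℕ, 0 < 1 / ((k:ℝ) + 1) := fun k => by positivity
  calc _ ≤ ∫⁻ x : Fin (n+1) → ℝ, Filter.liminf (fun k : ℕ =>
        ENNReal.ofReal (1 / (∑ j, x j ^ 2 + 1 / ((k:ℝ) + 1)))) Filter.atTop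
        ∂(Measure.pi fun i => gaussianReal (θ i) v.toNNReal) := by
        refine lintegral_mono_ae ?_
        filter_upwards [js_ae_ne θ v hv] with x hx
        refine le_of_eq (Filter.Tendsto.liminf_eq ?_).symm
        refine ENNReal.tendsto_ofReal ?_
        have := js_eps_tendsto.const_add (∑ j, x j ^ 2)
        rw [add_zero] at this
        exact tendsto_const_nhds.div this hx.ne'
    _ ≤ Filter.liminf (fun k : ℕ => ∫⁻ x : Fin (n+1) → ℝ,
        ENNReal.ofReal (1 / (∑ j, x j ^ 2 + 1 / ((k:ℝ) + 1)))
        ∂(Measure.pi fun i => gaussianReal (θ i) v.toNNReal)) Filter.atTop :=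
        lintegral_liminf_le fun k => by fun_prop
    _ ≤ ENNReal.ofReal K := by
        refine Filter.liminf_le_of_le (by isBoundedDefault) fun b hb => ?_
        obtain ⟨k, hk⟩ := hb.exists
        refine hk.trans ?_
        rw [← ofReal_integral_eq_lintegral_ofReal]
        · exact ENNReal.ofReal_le_ofReal (js_inv_bound θ v hv hn (hpos k))
        · exact js_bdd (by fun_prop) fun x => js_b2 (js_N_nonneg x) (hpos k)
        · refine ae_of_all _ fun x => ?_
          have := js_N_nonneg x
          simp only [Pi.zero_apply]; positivity

lemma js_TN {c : ℝ} (hc : 0 < c) (x : Fin (n+1) → ℝ) (hx : 0 < ∑ j, x j ^ 2) {ε : ℝ} (hε : 0 ≤ ε) :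
    |(∑ i, θ i * x i) / (∑ j, x j ^ 2 + ε)| ≤
      c / 2 * (1 / ∑ j, x j ^ 2) + (∑ i, θ i ^ 2) / (2 * c) := by
  have hT := js_T_abs θ hc x
  set T := ∑ i, θ i * x i
  set t := ∑ i, θ i ^ 2
  set N := ∑ i, x i ^ 2
  rw [abs_div, abs_of_pos (by positivity : 0 < N + ε)]
  calc |T| / (N + ε) ≤ |T| / N := by gcongr; linarith
    _ ≤ (c / 2 + t / (2 * c) * N) / N := by gcongr
    _ = _ := by field_simp

lemma js_lim (hv : 0 < v) (hn : 0 < (n:ℝ) - 1) :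
    ∫ x : Fin (n+1) → ℝ, (1 - (∑ j, θ j * x j) / (∑ j, x j ^ 2)
        - ((n:ℝ) - 1) * v * (1 / ∑ j, x j ^ 2))
      ∂(Measure.pi fun i => gaussianReal (θ i) v.toNNReal) = 0 ∧
    0 ≤ ∫ x : Fin (n+1) → ℝ, ((∑ j, θ j ^ 2) * (1 / ∑ j, x j ^ 2)
        - (∑ j, θ j * x j) / (∑ j, x j ^ 2))
      ∂(Measure.pi fun i => gaussianReal (θ i) v.toNNReal) := by
  have hc : 0 < ((n:ℝ) - 1) * v := by positivity
  set c := ((n:ℝ) - 1) * v with hcdef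
  set t := ∑ i, θ i ^ 2
  have ht : 0 ≤ t := js_N_nonneg θ
  have hpos : ∀ k : ℕ, 0 < 1 / ((k:ℝ) + 1) := fun k => by positivity
  have hI := js_inv_int θ v hv hn
  constructor
  · have L := tendsto_integral_of_dominated_convergence
      (μ := Measure.pi fun i => gaussianReal (θ i) v.toNNReal)
      (F := fun k : ℕ => jsG θ v (1 / ((k:ℝ) + 1)))
      (f := fun x : Fin (n+1) → ℝ => 1 - (∑ j, θ j * x j) / (∑ j, x j ^ 2)
        - c * (1 / ∑ j, x j ^ 2))
      (fun x => 1 + (c / 2 * (1 / ∑ j, x j ^ 2) + t / (2 * c))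
        + v * ((n:ℝ) + 1 + 2) * (1 / ∑ j, x j ^ 2))
      (fun k => (js_G_int θ v (hpos k)).1.aestronglyMeasurable)
      (((integrable_const _).add ((hI.const_mul _).add (integrable_const _))).add
        (hI.const_mul _)) (fun k => ?_) ?_
    · refine tendsto_nhds_unique L ?_
      simp_rw [fun k : ℕ => (js_G_int θ v (hpos k)).2 hv]
      exact tendsto_const_nhds
    · filter_upwards [js_ae_ne θ v hv] with x hx
      have hT := js_TN θ hc x hx (hpos k).le
      have hε := hpos k
      simp only [jsG, Real.norm_eq_abs]
      set ε := 1 / ((k:ℝ) + 1)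
      set T := ∑ i, θ i * x i
      set N := ∑ i, x i ^ 2
      have hp : 0 < N + ε := by positivity
      have b1 : |N / (N + ε)| ≤ 1 := by
        rw [abs_of_nonneg (by positivity), div_le_one hp]; linarith
      have b2 : |v * (((n:ℝ) + 1) / (N + ε) - 2 * (N / (N + ε)^2))|
          ≤ v * ((n:ℝ) + 1 + 2) * (1 / N) := by
        rw [abs_mul, abs_of_pos hv, mul_assoc]
        gcongr
        refine (abs_sub _ _).trans ?_
        rw [abs_of_nonneg (by positivity), abs_of_nonneg (by positivity)]
        have c1 : ((n:ℝ) + 1) / (N + ε) ≤ ((n:ℝ) + 1) * (1 / N) := by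
          rw [mul_one_div]; gcongr; linarith
        have c2 : N / (N+ε)^2 ≤ 1 / N := by
          rw [div_le_div_iff₀ (by positivity) hx]; nlinarith
        linarith
      exact (abs_sub _ _).trans (add_le_add ((abs_sub _ _).trans (add_le_add b1 hT)) b2)
    · filter_upwards [js_ae_ne θ v hv] with x hx
      simp only [jsG]
      set T := ∑ i, θ i * x i
      set N := ∑ i, x i ^ 2
      have l : Filter.Tendsto (fun k : ℕ => N + 1 / ((k:ℝ) + 1)) Filter.atTop (nhds N) := by
        simpa using js_eps_tendsto.const_add N
      have l2 := ((tendsto_const_nhds (x := N)).div l hx.ne').sub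
        ((tendsto_const_nhds (x := T)).div l hx.ne') |>.sub
        ((((tendsto_const_nhds (x := (n:ℝ)+1)).div l hx.ne').sub
        (((tendsto_const_nhds (x := N)).div (l.pow 2) (by positivity)).const_mul 2)).const_mul v)
      have e : 1 - T / N - c * (1 / N) = N / N - T / N - v * ((↑n + 1) / N - 2 * (N / N ^ 2)) := by
        rw [hcdef]
        field_simp
        ring
      rw [e]
      exact l2
  · have L := tendsto_integral_of_dominated_convergence
      (μ := Measure.pi fun i => gaussianReal (θ i) v.toNNReal)
      (F := fun k : ℕ => jsH θ (1 / ((k:ℝ) + 1)))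
      (f := fun x : Fin (n+1) → ℝ => t * (1 / ∑ j, x j ^ 2)
        - (∑ j, θ j * x j) / (∑ j, x j ^ 2))
      (fun x => t * (1 / ∑ j, x j ^ 2) + (c / 2 * (1 / ∑ j, x j ^ 2) + t / (2 * c)))
      (fun k => Measurable.aestronglyMeasurable (by unfold jsH; fun_prop))
      ((hI.const_mul _).add ((hI.const_mul _).add (integrable_const _))) (fun k => ?_) ?_
    · exact ge_of_tendsto' L fun k => js_H_int θ v hv (hpos k)
    · filter_upwards [js_ae_ne θ v hv] with x hx
      have hT := js_TN θ hc x hx (hpos k).le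
      have hε := hpos k
      simp only [jsH, Real.norm_eq_abs]
      set ε := 1 / ((k:ℝ) + 1)
      set T := ∑ i, θ i * x i
      set N := ∑ i, x i ^ 2
      have b1 : |t / (N + ε)| ≤ t * (1 / N) := by
        rw [abs_of_nonneg (by positivity), mul_one_div]
        gcongr; linarith
      rw [sub_div]
      exact (abs_sub _ _).trans (add_le_add b1 hT)
    · filter_upwards [js_ae_ne θ v hv] with x hx
      simp only [jsH]
      set T := ∑ i, θ i * x i
      set N := ∑ i, x i ^ 2
      have l : Filter.Tendsto (fun k : ℕ => N + 1 / ((k:ℝ) + 1)) Filter.atTop (nhds N) := by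
        simpa using js_eps_tendsto.const_add N
      have l2 := (tendsto_const_nhds (x := t - T)).div l hx.ne'
      have e : t * (1 / N) - T / N = (t - T) / N := by ring
      rw [e]
      exact l2

lemma js_sq_int (i : Fin (n+1)) :
    Integrable (fun x : Fin (n+1) → ℝ => (x i - θ i)^2)
      (Measure.pi fun i => gaussianReal (θ i) v.toNNReal) ∧ (0 < v →
    ∫ x : Fin (n+1) → ℝ, (x i - θ i)^2 ∂(Measure.pi fun i => gaussianReal (θ i) v.toNNReal) = v) := by
  have hm : MemLp (fun x : ℝ => x - θ i) 2 (gaussianReal (θ i) v.toNNReal) :=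
    (memLp_id_gaussianReal (μ := θ i) (v := v.toNNReal) 2).sub (memLp_const _)
  constructor
  · exact integrable_comp_eval (μ := fun i => gaussianReal (θ i) v.toNNReal) (i := i)
      (f := fun y => (y - θ i)^2) hm.integrable_sq
  · intro hv
    have h := integral_comp_eval (μ := fun i => gaussianReal (θ i) v.toNNReal) (i := i)
      (f := fun y => (y - θ i)^2) (Measurable.aestronglyMeasurable (by fun_prop))
    rw [h]
    have h2 := variance_fun_id_gaussianReal (μ := θ i) (v := v.toNNReal)
    rw [variance_eq_integral (by fun_prop), integral_id_gaussianReal] at h2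
    simpa [hv.le] using h2

lemma js_main (hv : 0 < v) (hn : 0 < (n:ℝ) - 1) :
    ∫ x : Fin (n+1) → ℝ,
        (∑ i, (θ i - (1 - ((n:ℝ) - 1)*v/(∑ j, (x j)^2)) * x i)^2)
        ∂(Measure.pi fun i => gaussianReal (θ i) v.toNNReal)
      ≤ 2*v + ((n:ℝ)+1)*v*(∑ i, (θ i)^2)/(((n:ℝ)+1)*v + ∑ i, (θ i)^2) := by
  have hc : 0 < ((n:ℝ) - 1) * v := by positivity
  obtain ⟨h1, h2⟩ := js_lim θ v hv hn
  have hI := js_inv_int θ v hv hn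
  set c := ((n:ℝ) - 1) * v with hcdef
  have ht : 0 ≤ ∑ i, θ i ^ 2 := js_N_nonneg θ
  have hJ : Integrable (fun x : Fin (n+1) → ℝ => (∑ j, θ j * x j) / (∑ j, x j ^ 2))
      (Measure.pi fun i => gaussianReal (θ i) v.toNNReal) := by
    refine Integrable.mono' (g := fun x => c / 2 * (1 / ∑ j, x j ^ 2) + (∑ i, θ i ^ 2) / (2 * c))
      ((hI.const_mul _).add (integrable_const _))
      (Measurable.aestronglyMeasurable (by fun_prop)) ?_
    filter_upwards [js_ae_ne θ v hv] with x hx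
    have := js_TN θ hc x hx le_rfl
    rw [add_zero] at this
    exact this
  have hS : Integrable (fun x : Fin (n+1) → ℝ => ∑ i, (x i - θ i)^2)
      (Measure.pi fun i => gaussianReal (θ i) v.toNNReal) :=
    integrable_finsetSum _ fun i _ => (js_sq_int θ v i).1
  have hS2 : ∫ x : Fin (n+1) → ℝ, ∑ i, (x i - θ i)^2
      ∂(Measure.pi fun i => gaussianReal (θ i) v.toNNReal) = ((n:ℝ)+1) * v := by
    rw [integral_finsetSum _ fun i _ => (js_sq_int θ v i).1]
    simp_rw [fun i => (js_sq_int θ v i).2 hv]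
    simp
  have e : ∫ x : Fin (n+1) → ℝ,
        (∑ i, (θ i - (1 - c/(∑ j, (x j)^2)) * x i)^2)
        ∂(Measure.pi fun i => gaussianReal (θ i) v.toNNReal)
      = ∫ x : Fin (n+1) → ℝ, ((∑ i, (x i - θ i)^2) -
        2 * c * (1 - (∑ j, θ j * x j) / (∑ j, x j ^ 2) - c * (1 / ∑ j, x j ^ 2))
        - c^2 * (1 / ∑ j, x j ^ 2))
        ∂(Measure.pi fun i => gaussianReal (θ i) v.toNNReal) := by
    refine integral_congr_ae ?_
    filter_upwards [js_ae_ne θ v hv] with x hx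
    have h : ∀ i, (θ i - (1 - c/(∑ j, (x j)^2)) * x i)^2 = (x i - θ i)^2
      + θ i * x i * (2 * c / ∑ j, (x j)^2)
      + (x i)^2 * (- 2 * c / (∑ j, (x j)^2) + (c / ∑ j, (x j)^2)^2) := fun i => by ring
    simp_rw [h, Finset.sum_add_distrib, ← Finset.sum_mul]
    field_simp
    ring
  have hK : Integrable (fun x : Fin (n+1) → ℝ => 1 - (∑ j, θ j * x j) / (∑ j, x j ^ 2)
      - c * (1 / ∑ j, x j ^ 2)) (Measure.pi fun i => gaussianReal (θ i) v.toNNReal) :=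
    ((integrable_const _).sub hJ).sub (hI.const_mul _)
  have hSK : Integrable (fun x : Fin (n+1) → ℝ => (∑ i, (x i - θ i)^2) -
      2 * c * (1 - (∑ j, θ j * x j) / (∑ j, x j ^ 2) - c * (1 / ∑ j, x j ^ 2)))
      (Measure.pi fun i => gaussianReal (θ i) v.toNNReal) := hS.sub (hK.const_mul _)
  have hK1 : Integrable (fun x : Fin (n+1) → ℝ => 1 - (∑ j, θ j * x j) / (∑ j, x j ^ 2))
      (Measure.pi fun i => gaussianReal (θ i) v.toNNReal) := (integrable_const _).sub hJ
  rw [e, integral_sub hSK (hI.const_mul _),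
    integral_sub hS (hK.const_mul _), integral_const_mul, integral_const_mul, h1, hS2]
  rw [integral_sub hK1 (hI.const_mul _),
    integral_sub (integrable_const _) hJ, integral_const_mul] at h1
  rw [integral_sub (hI.const_mul _) hJ, integral_const_mul] at h2
  simp only [integral_const, probReal_univ, smul_eq_mul, mul_one] at h1
  set m := ∫ x : Fin (n+1) → ℝ, 1 / ∑ j, x j ^ 2
    ∂(Measure.pi fun i => gaussianReal (θ i) v.toNNReal)
  set t := ∑ i, θ i ^ 2
  have hm : 1 / (c + t) ≤ m := by
    rw [div_le_iff₀ (by positivity)]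
    linarith
  have hfin : ((n:ℝ)+1) * v - c^2 * (1 / (c + t)) ≤
      2*v + ((n:ℝ)+1)*v*t/(((n:ℝ)+1)*v + t) := by
    have hd : ((n:ℝ)+1) * v = c + 2 * v := by rw [hcdef]; ring
    rw [hd]
    have e1 : c + 2 * v - c^2 * (1 / (c + t)) = 2 * v + c * t / (c + t) := by
      field_simp; ring
    rw [e1]
    have : c * t / (c + t) ≤ (c + 2 * v) * t / (c + 2 * v + t) := by
      rw [div_le_div_iff₀ (by positivity) (by positivity)]
      nlinarith [mul_nonneg hv.le (mul_nonneg ht ht)]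
    linarith
  have := mul_le_mul_of_nonneg_left hm (sq_nonneg c)
  linarith
end

theorem stmt10 (d : ℕ) (hd : 2 < d) (v : ℝ) (hv : 0 < v) (θ : Fin d → ℝ) :
    ∫ x : Fin d → ℝ,
        (∑ i, (θ i - (1 - ((d:ℝ)-2)*v/(∑ j, (x j)^2)) * x i)^2)
        ∂(Measure.pi fun i => gaussianReal (θ i) v.toNNReal)
      ≤ 2*v + (d:ℝ)*v*(∑ i, (θ i)^2)/((d:ℝ)*v + ∑ i, (θ i)^2) := by
  obtain ⟨n, rfl⟩ : ∃ n, d = n + 1 := ⟨d - 1, by omega⟩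
  have hn : 0 < (n:ℝ) - 1 := by
    have : (1:ℝ) < n := by exact_mod_cast (by omega : 1 < n)
    linarith
  have h := js_main θ v hv hn
  have e : (((n + 1 : ℕ) : ℝ) - 2) = (n:ℝ) - 1 := by push_cast; ring
  rw [e]
  push_cast
  exact h
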